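/- arXiv:1607.05889 — 3 statements merged into one kernel-verified Lean document; each statement's English description precedes it below -/
import Mathlib

section
/- For every j ∈ F_q*, h(ε,j) = −2 + q·δ(j²,−1) + δ(j²,1), where δ(u,v) = 1 if u = v and 0 otherwise. -/
/-!
For a nontrivial multiplicative character `χ` of a field with `q` elements, the inversion `x ↦ x⁻¹`
turns the summand `χ(x) χ⁻¹(xu + v)`, `x ≠ 0`, into `χ⁻¹(u + xv)`. The latter is affine in `x`, so
its sum over the whole field is `0` unless `v = 0`; as the term at `x = 0` is missing, the sum over
`x ≠ 0` is `χ⁻¹(u) (q δ(v,0) - 1)`. For `χ = φ = φ⁻¹`, the substitution `x ↦ 1 - x` brings `h(ε,j)`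
to this form with `u = -(j + 1)²` and `v = (j + 1)² + (j - 1)² = 2 (j² + 1)`, except that the term
`φ((j - 1)²)` at the excluded point `x = 0` of `h(ε,j)` has to be subtracted.
-/

open Finset

noncomputable section

variable {F : Type} [Field F] [Fintype F] [DecidableEq F]

/-- Katz's mixed character sum `P(j,k)`; the quadratic character `φ` is `A₄ ^ 2`. -/
def Pkatz (ψ : AddChar F ℂ) (A₄ : MulChar F ℂ) (a : F) (j k : F) : ℂ :=
  (if j = k then 1 else 0) + (A₄ ^ 2) (-1) * (if j = -k then 1 else 0) +
    (gaussSum (A₄ ^ 2) ψ)⁻¹ *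
      ∑ x ∈ univ.filter (fun x : F => x ≠ 0),
        (A₄ ^ 2) (a / x - x) * ψ (x * (j + k) ^ 2 + (a / x) * (j - k) ^ 2)

/-- Katz's sums `V(j)`. -/
def Vkatz (ψ : AddChar F ℂ) (A₄ : MulChar F ℂ) (a : F) (τ : ℂ) (j : F) : ℂ :=
  if j = 0 then gaussSum A₄ ψ / τ + τ / gaussSum A₄ ψ
  else τ⁻¹ * ∑ x ∈ univ.filter (fun x : F => x ≠ 0), A₄ x * ψ (x + a * j ^ 4 / x)

/-- The finite field hypergeometric function `₂F₁(A,B;C|x)`. -/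
def hyp2F1 (A B C : MulChar F ℂ) (x : F) : ℂ :=
  ((1 : MulChar F ℂ) x / (Fintype.card F : ℂ)) *
    ∑ y : F, B y * (B⁻¹ * C) (y - 1) * A⁻¹ (1 - x * y)

/-- The Jacobi sum `J(A,B)`. -/
def Jsum (A B : MulChar F ℂ) : ℂ := ∑ y : F, A y * B (1 - y)

/-- The sum `h(D,j)`; the quadratic character `φ` is `A₄ ^ 2`. -/
def hKatz (A₄ D : MulChar F ℂ) (j : F) : ℂ :=
  ∑ x ∈ univ.filter (fun x : F => x ≠ 0),
    D x * (A₄ ^ 2) (1 - x) * ((D⁻¹ ^ 2) * A₄ ^ 2) (x * (j + 1) ^ 2 + (j - 1) ^ 2)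

/-- The sum `H(λ₁)`; the quadratic character `φ` is `A₄ ^ 2`. -/
def Hkatz (A₄ lam : MulChar F ℂ) (a : F) : ℂ :=
  ∑ p ∈ (univ ×ˢ univ).filter
      (fun p : F × F => p.1 ≠ 0 ∧ p.2 ≠ 0 ∧
        p.2 * (p.1 + 1) ^ 2 + a * (p.1 - 1) ^ 2 / p.2 = 0),
    (lam ^ 2 * A₄ ^ 2) p.1 * (A₄ ^ 2) (p.2 - a / p.2)

/-- The Mellin transform `S(χ)` of the sums `V(j)`. -/
def Smel (ψ : AddChar F ℂ) (A₄ : MulChar F ℂ) (a : F) (τ : ℂ) (χ : MulChar F ℂ) : ℂ :=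
  ∑ j ∈ univ.filter (fun j : F => j ≠ 0), χ j * Vkatz ψ A₄ a τ j

/-- The Mellin transform `T(χ)` of the sums `P(j,0)`. -/
def Tmel (ψ : AddChar F ℂ) (A₄ : MulChar F ℂ) (a : F) (χ : MulChar F ℂ) : ℂ :=
  ∑ j ∈ univ.filter (fun j : F => j ≠ 0), χ j * Pkatz ψ A₄ a j 0

/-- The double Mellin transform `T(χ₁,χ₂)` of the sums `P(j,k)`. -/
def Tmel2 (ψ : AddChar F ℂ) (A₄ : MulChar F ℂ) (a : F) (χ₁ χ₂ : MulChar F ℂ) : ℂ :=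
  ∑ j ∈ univ.filter (fun j : F => j ≠ 0), ∑ k ∈ univ.filter (fun k : F => k ≠ 0),
    χ₁ j * χ₂ k * Pkatz ψ A₄ a j k

end

section AffineSums

variable {K R : Type*} [Field K] [Fintype K] [DecidableEq K] [CommRing R] [IsDomain R]
  {χ : MulChar K R}

lemma sum_mulChar_affine (hχ : χ ≠ 1) (u v : K) :
    ∑ x, χ (u + x * v) = if v = 0 then (Fintype.card K : R) * χ u else 0 := by
  split_ifs with hv
  · simp [hv]
  · rw [← MulChar.sum_eq_zero_of_ne_one hχ]
    exact Fintype.sum_equiv ((Equiv.mulRight₀ v hv).trans (Equiv.addLeft u)) _ _ fun _ ↦ rfl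

lemma sum_mulChar_mul_inv_affine (hχ : χ ≠ 1) (u v : K) :
    ∑ x, χ x * χ⁻¹ (x * u + v) = χ⁻¹ u * ((if v = 0 then (Fintype.card K : R) else 0) - 1) := by
  have term_inv (x : K) :
      χ x⁻¹ * χ⁻¹ (x⁻¹ * u + v) = χ⁻¹ (u + x * v) - if x = 0 then χ⁻¹ u else 0 := by
    obtain rfl | hx := eq_or_ne x 0
    · simp [MulChar.map_zero]
    · rw [← MulChar.inv_apply', ← map_mul, if_neg hx, sub_zero, mul_add, mul_inv_cancel_left₀ hx]
  calc ∑ x, χ x * χ⁻¹ (x * u + v)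
      = ∑ x, χ x⁻¹ * χ⁻¹ (x⁻¹ * u + v) := (Equiv.sum_comp (Equiv.inv K) _).symm
    _ = ∑ x, χ⁻¹ (u + x * v) - χ⁻¹ u := by simp [term_inv, sum_sub_distrib]
    _ = χ⁻¹ u * ((if v = 0 then (Fintype.card K : R) else 0) - 1) := by
      rw [sum_mulChar_affine (inv_ne_one.mpr hχ)]
      split_ifs <;> ring

lemma sum_mulChar_one_sub_mul_inv_affine (hχ : χ ≠ 1) (u v : K) :
    ∑ x, χ (1 - x) * χ⁻¹ (x * u + v) =
      χ⁻¹ (-u) * ((if u + v = 0 then (Fintype.card K : R) else 0) - 1) := by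
  rw [← sum_mulChar_mul_inv_affine hχ]
  refine Fintype.sum_equiv (Equiv.subLeft 1) _ _ fun x ↦ ?_
  rw [Equiv.subLeft_apply]
  ring_nf

end AffineSums

lemma mulChar_pow_apply_pow_of_pow_mul_eq_one {G M : Type*} [CommGroupWithZero G] [DecidableEq G]
    [CommMonoidWithZero M] {χ : MulChar G M} {m n : ℕ} (hχ : χ ^ (m * n) = 1) (hn : n ≠ 0) (x : G) :
    (χ ^ m) (x ^ n) = if x = 0 then 0 else 1 := by
  rw [map_pow, ← MulChar.pow_apply' _ hn, ← pow_mul, hχ]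
  split_ifs with hx
  · rw [hx, MulChar.map_zero]
  · exact MulChar.one_apply (IsUnit.mk0 x hx)

section TrivialCharacter

variable {F : Type} [Field F] [Fintype F] [DecidableEq F] (A : MulChar F ℂ) (j : F)

lemma hKatz_one_eq_sum_sub :
    hKatz A 1 j =
      ∑ x, (A ^ 2) (1 - x) * (A ^ 2) (x * (j + 1) ^ 2 + (j - 1) ^ 2) - (A ^ 2) ((j - 1) ^ 2) := by
  rw [hKatz, filter_ne', ← add_sum_erase univ _ (mem_univ (0 : F))]
  simp only [sub_zero, map_one, zero_mul, zero_add, one_mul, add_sub_cancel_left]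
  refine sum_congr rfl fun x hx ↦ ?_
  rw [MulChar.one_apply (ne_of_mem_erase hx).isUnit, inv_one, one_pow, one_mul, one_mul]

variable {A}

lemma hKatz_one_of_pow_four_eq_one (hA : A ^ 4 = 1) (hA_sq : A ^ 2 ≠ 1) :
    hKatz A 1 j =
      (if j = -1 then 0 else 1) *
          ((if (j + 1) ^ 2 + (j - 1) ^ 2 = 0 then (Fintype.card F : ℂ) else 0) - 1) -
        if j = 1 then 0 else 1 := by
  have sq_values (x : F) : (A ^ 2) (x ^ 2) = if x = 0 then 0 else 1 :=
    mulChar_pow_apply_pow_of_pow_mul_eq_one hA two_ne_zero x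
  have inv_eq : (A ^ 2)⁻¹ = A ^ 2 := inv_eq_of_mul_eq_one_left (by rw [← pow_add, hA])
  have even (x : F) : (A ^ 2) (-x) = (A ^ 2) x := by
    simp only [MulChar.pow_apply' A two_ne_zero, ← map_pow, neg_sq]
  have sum_eq := sum_mulChar_one_sub_mul_inv_affine hA_sq ((j + 1) ^ 2) ((j - 1) ^ 2)
  rw [inv_eq, even] at sum_eq
  rw [hKatz_one_eq_sum_sub, sum_eq]
  simp only [sq_values, sub_eq_zero, add_eq_zero_iff_eq_neg]

end TrivialCharacter

/-- Evaluation of `h(ε,j)`. -/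
theorem h_triv_eval
    (F : Type) [Field F] [Fintype F] [DecidableEq F]
    (hq : Fintype.card F % 4 = 1)
    (A₄ : MulChar F ℂ) (hA₄ : orderOf A₄ = 4) :
    ∀ j : F, j ≠ 0 →
      hKatz A₄ (1 : MulChar F ℂ) j =
        -2 + (Fintype.card F : ℂ) * (if j ^ 2 = -1 then 1 else 0) +
          (if j ^ 2 = 1 then 1 else 0) := by
  intro j _
  have two_ne : (2 : F) ≠ 0 := Ring.two_ne_zero fun h ↦ by
    have := FiniteField.even_card_of_char_two h
    omega
  have one_ne_neg_one : (1 : F) ≠ -1 := fun h ↦ two_ne (by linear_combination h)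
  have hA₄_four : A₄ ^ 4 = 1 := hA₄ ▸ pow_orderOf_eq_one A₄
  have hA₄_two : A₄ ^ 2 ≠ 1 := pow_ne_one_of_lt_orderOf two_ne_zero (by omega)
  have sq_add_sq_eq_zero_iff : (j + 1) ^ 2 + (j - 1) ^ 2 = 0 ↔ j ^ 2 = -1 := by
    rw [show (j + 1) ^ 2 + (j - 1) ^ 2 = 2 * (j ^ 2 + 1) by ring, mul_eq_zero_iff_left two_ne,
      add_eq_zero_iff_eq_neg]
  rw [hKatz_one_of_pow_four_eq_one j hA₄_four hA₄_two]
  simp only [sq_add_sq_eq_zero_iff, sq_eq_one_iff]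
  obtain rfl | hj_one := eq_or_ne j 1
  · simp only [one_pow, one_ne_neg_one, true_or, if_true, if_false]
    ring
  obtain rfl | hj_neg := eq_or_ne j (-1)
  · simp only [neg_one_sq, one_ne_neg_one, one_ne_neg_one.symm, or_true, if_true, if_false]
    ring
  · simp only [hj_one, hj_neg, or_self, if_false]
    split_ifs <;> ring
end

section
/- For every j ∈ F_q*, h(A₄,j) = J(A₄,φ) − φ(j⁴ − 1) and h(A̅₄,j) = J(A̅₄,φ) − φ(j⁴ − 1). -/
/-!
If `D² = φ` and `φ² = 1`, the last factor `D⁻²φ` of `h(D,j)` is the trivial character, so `h(D,j)`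
is the Jacobi sum `J(D,φ)` with the term at the root `x₀ = -((j-1)/(j+1))²` of
`x(j+1)² + (j-1)²` removed. Since `φ(1-x₀) = D((1-x₀)²)`, that term is
`D(x₀(1-x₀)²) = D(-4((j⁴-1)/(j+1)⁴)²)`. Here `-4 = (1+i)⁴` with `i² = -1` and `(j+1)⁸` are fourth
powers, on which `D` is trivial, and `D((j⁴-1)²) = φ(j⁴-1)` remains.
-/

open Finset

section QuarticEval

lemma mulChar_apply_pow {M R : Type*} [CommMonoid M] [CommMonoidWithZero R] (D : MulChar M R)
    {n : ℕ} (hn : n ≠ 0) (a : M) : D (a ^ n) = (D ^ n) a := by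
  rw [map_pow, MulChar.pow_apply' D hn]

lemma exists_pow_four_eq_neg_four {R : Type*} [CommRing R] (h : IsSquare (-1 : R)) :
    ∃ a : R, a ^ 4 = -4 := by
  obtain ⟨i, hi⟩ := h
  exact ⟨1 + i, by linear_combination -(i ^ 2 + 4 * i + 5) * hi⟩

variable {F R : Type*} [Field F]

lemma mulChar_neg_four_mul_sq_eq [CommMonoidWithZero R] (h2 : (2 : F) ≠ 0)
    (hi : IsSquare (-1 : F)) {D : MulChar F R} (hD : D ^ 4 = 1) (a : F) {b : F} (hb : b ≠ 0) :
    D (-4 * (a / b ^ 4) ^ 2) = (D ^ 2) a := by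
  obtain ⟨c, hc⟩ := exists_pow_four_eq_neg_four hi
  have h4 : (-4 : F) ≠ 0 := by
    rw [show (-4 : F) = -2 ^ 2 by norm_num]
    exact neg_ne_zero.2 (pow_ne_zero 2 h2)
  have hc0 : c ≠ 0 := by
    rintro rfl
    exact h4 (by simpa using hc.symm)
  have hfactor : -4 * (a / b ^ 4) ^ 2 = (c / b ^ 2) ^ 4 * a ^ 2 := by
    rw [← hc]
    ring
  have hunit : IsUnit (c / b ^ 2) := (div_ne_zero hc0 (pow_ne_zero 2 hb)).isUnit
  rw [hfactor, map_mul, mulChar_apply_pow D four_ne_zero, hD, MulChar.one_apply hunit, one_mul,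
    mulChar_apply_pow D two_ne_zero]

variable [Fintype F] [CommRing R]

lemma sum_mul_one_apply_affine {f : F → R} (hf : f 0 = 0) {a b : F} (hab : a ≠ 0 ∨ b ≠ 0) :
    ∑ x, f x * (1 : MulChar F R) (x * a + b) = ∑ x, f x - f (-(b / a)) := by
  classical
  rcases eq_or_ne a 0 with rfl | ha
  · -- There is no root; as `b / 0 = 0`, the subtracted term is `f 0 = 0`.
    have hb : b ≠ 0 := by simpa using hab
    simp [hf, MulChar.one_apply hb.isUnit]
  · have hterm (x : F) :
        f x * (1 : MulChar F R) (x * a + b) = f x - if x = -(b / a) then f x else 0 := by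
      split_ifs with hx
      · rw [hx, neg_mul, div_mul_cancel₀ b ha, neg_add_cancel, MulChar.map_zero, mul_zero, sub_self]
      · have hne : x * a + b ≠ 0 := fun h ↦
          hx (by rw [← neg_div, eq_div_iff ha, eq_neg_of_add_eq_zero_left h])
        rw [MulChar.one_apply hne.isUnit, mul_one, sub_zero]
    simp only [hterm, sum_sub_distrib, sum_ite_eq', mem_univ, if_true]

lemma sum_mulChar_mul_one_apply_eq_jacobiSum_sub (h2 : (2 : F) ≠ 0) (D : MulChar F R) (j : F) :
    ∑ x, D x * (D ^ 2) (1 - x) * (1 : MulChar F R) (x * (j + 1) ^ 2 + (j - 1) ^ 2) =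
      jacobiSum D (D ^ 2) - D (-4 * ((j ^ 4 - 1) / (j + 1) ^ 4) ^ 2) := by
  have hcoeff : (j + 1) ^ 2 ≠ 0 ∨ (j - 1) ^ 2 ≠ 0 := by
    by_contra! h
    obtain ⟨hp, hm⟩ := h.imp eq_zero_of_pow_eq_zero eq_zero_of_pow_eq_zero
    exact h2 (by linear_combination hp - hm)
  have hroot : -((j - 1) ^ 2 / (j + 1) ^ 2) * (1 - -((j - 1) ^ 2 / (j + 1) ^ 2)) ^ 2 =
      -4 * ((j ^ 4 - 1) / (j + 1) ^ 4) ^ 2 := by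
    rcases eq_or_ne (j + 1) 0 with hj | hj
    · simp [hj]
    · field_simp
      ring
  have hzero : D 0 * (D ^ 2) (1 - 0) = 0 := by rw [MulChar.map_zero, zero_mul]
  rw [sum_mul_one_apply_affine (f := fun x ↦ D x * (D ^ 2) (1 - x)) hzero hcoeff,
    ← mulChar_apply_pow D two_ne_zero, ← map_mul, hroot, jacobiSum]

theorem h_quartic_eval_general [DecidableEq F] (hq : Fintype.card F % 4 = 1)
    {φ D : MulChar F R} (hφ : φ ^ 2 = 1) (hD : D ^ 2 = φ) (j : F) :
    ∑ x with x ≠ 0, D x * φ (1 - x) * (D⁻¹ ^ 2 * φ) (x * (j + 1) ^ 2 + (j - 1) ^ 2) =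
      jacobiSum D φ - φ (j ^ 4 - 1) := by
  have h2 : (2 : F) ≠ 0 := Ring.two_ne_zero fun h ↦ by
    have := FiniteField.even_card_of_char_two h
    omega
  have hi : IsSquare (-1 : F) := FiniteField.isSquare_neg_one_iff.2 (by omega)
  have hD4 : D ^ 4 = 1 := by rw [← hφ, ← hD, ← pow_mul]
  have htrivial : D⁻¹ ^ 2 * φ = 1 := by rw [← hD, inv_pow, inv_mul_cancel]
  have hsupport : ∀ x ∈ univ,
      D x * φ (1 - x) * (1 : MulChar F R) (x * (j + 1) ^ 2 + (j - 1) ^ 2) ≠ 0 → x ≠ 0 := by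
    rintro x - hx rfl
    simp only [MulChar.map_zero, zero_mul, ne_eq, not_true_eq_false] at hx
  rw [htrivial, sum_filter_of_ne hsupport, ← hD,
    sum_mulChar_mul_one_apply_eq_jacobiSum_sub h2]
  rcases eq_or_ne (j + 1) 0 with hj | hj
  · simp [eq_neg_of_add_eq_zero_left hj, Even.neg_one_pow (by decide : Even 4), MulChar.map_zero]
  · rw [mulChar_neg_four_mul_sq_eq h2 hi hD4 _ hj]

end QuarticEval

/-- Evaluation of `h(A₄,j)` and `h(A̅₄,j)`. -/
theorem h_quartic_eval
    (F : Type) [Field F] [Fintype F] [DecidableEq F]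
    (hq : Fintype.card F % 4 = 1)
    (A₄ : MulChar F ℂ) (hA₄ : orderOf A₄ = 4) :
    ∀ j : F, j ≠ 0 →
      hKatz A₄ A₄ j = Jsum A₄ (A₄ ^ 2) - (A₄ ^ 2) (j ^ 4 - 1) ∧
      hKatz A₄ A₄⁻¹ j = Jsum A₄⁻¹ (A₄ ^ 2) - (A₄ ^ 2) (j ^ 4 - 1) := by
  intro j _
  have h4 : A₄ ^ 4 = 1 := hA₄ ▸ pow_orderOf_eq_one A₄
  have hφ : (A₄ ^ 2) ^ 2 = 1 := by rw [← pow_mul, h4]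
  have hinv : A₄⁻¹ ^ 2 = A₄ ^ 2 := by rw [inv_pow, inv_eq_iff_mul_eq_one, ← sq, hφ]
  exact ⟨h_quartic_eval_general hq hφ rfl j, h_quartic_eval_general hq hφ hinv j⟩
end

section
/- For every multiplicative character D of F_q with D ∉ {ε, A₄, A̅₄}, one has ₂F₁(D, DA₄; A₄ | 1) = D̄(4) · G(D̄²) / ( G(D̄²φ) · G(φ) ), where 4 denotes the element 1+1+1+1 of F_q. -/
/-!
At `x = 1` the factors `(B̄C)(y - 1)` and `Ā(1 - y)` of the hypergeometric sum combine, leaving a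
Jacobi sum. Rewriting it in Gauss sums and reflecting `G(B)` gives the finite field analogue of
Gauss's summation theorem, `₂F₁(A,B;C|1) = C(-1) G(ĀB̄C) / (G(B̄) G(ĀC))`. For `A = D`, `B = DA₄`,
`C = A₄` the denominator is `G(χ) G(χφ)` with `χ = D̄A₄` and `φ = A₄²`, since
`A̅₄ = A₄φ`, and the quadratic Hasse–Davenport formula `G(χ) G(χφ) = χ̄(4) G(χ²) G(φ)` evaluates it.
The leftover sign `A₄(-4)` is `1` because `-4 = (1 + i)⁴` with `i² = -1`.

The Hasse–Davenport formula amounts to `J(χ, χ) = χ̄(4) J(φ, χ)`, proved by completing the square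
in `y (1 - y)` and using that `u` has `φ(u) + 1` square roots.
-/

open Finset

section QuadraticCharacter

theorem mulChar_generator_eq_neg_one {M R : Type*} [CommMonoid M] [CommRing R] [NoZeroDivisors R]
    {χ : MulChar M R} (hχ : χ ≠ 1) (hχ_sq : χ ^ 2 = 1) {g : Mˣ}
    (hg : ∀ u, u ∈ Subgroup.zpowers g) : χ g = -1 := by
  have hg_ne_one : χ g ≠ 1 := fun h =>
    hχ ((MulChar.eq_iff hg χ 1).mpr (by rw [h, MulChar.one_apply_coe]))
  have hg_sq : χ g ^ 2 = 1 := by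
    rw [← χ.pow_apply_coe, hχ_sq, MulChar.one_apply_coe]
  exact (sq_eq_one_iff.mp hg_sq).resolve_left hg_ne_one

theorem ringChar_ne_two_of_mulChar_sq_eq_one {F R : Type*} [Field F] [Finite F]
    [CommMonoidWithZero R] {χ : MulChar F R} (hχ : χ ≠ 1) (hχ_sq : χ ^ 2 = 1) :
    ringChar F ≠ 2 := by
  intro hF
  refine hχ (MulChar.ext fun a => ?_)
  obtain ⟨r, hr⟩ := FiniteField.isSquare_of_char_two hF (a : F)
  have hr_unit : IsUnit r := isUnit_of_mul_isUnit_left (hr ▸ a.isUnit)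
  rw [hr, map_mul, ← sq, ← χ.pow_apply' two_ne_zero, hχ_sq, MulChar.one_apply hr_unit,
    ← sq, MulChar.one_apply (hr_unit.pow 2)]

variable {F R : Type*} [Field F] [Fintype F] [CommRing R] [IsDomain R]

theorem eq_quadraticChar_of_sq_eq_one [DecidableEq F] {χ : MulChar F R} (hχ : χ ≠ 1)
    (hχ_sq : χ ^ 2 = 1) : χ = (quadraticChar F).ringHomComp (Int.castRingHom R) := by
  obtain ⟨g, hg⟩ := IsCyclic.exists_generator (α := Fˣ)
  have hF := ringChar_ne_two_of_mulChar_sq_eq_one hχ hχ_sq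
  rw [MulChar.eq_iff hg, MulChar.ringHomComp_apply, mulChar_generator_eq_neg_one hχ hχ_sq hg,
    mulChar_generator_eq_neg_one (quadraticChar_ne_one hF)
      (quadraticChar_isQuadratic F).sq_eq_one hg, map_neg, map_one]

theorem card_sqrts_eq_apply_add_one [DecidableEq F] {φ : MulChar F R} (hφ : φ ≠ 1)
    (hφ_sq : φ ^ 2 = 1) (u : F) : (#{t : F | t ^ 2 = u} : R) = φ u + 1 := by
  have hF := ringChar_ne_two_of_mulChar_sq_eq_one hφ hφ_sq
  have hcard : (#{t : F | t ^ 2 = u} : ℤ) = quadraticChar F u + 1 := by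
    rw [← quadraticChar_card_sqrts hF u, Set.toFinset_ofPred]
  rw [eq_quadraticChar_of_sq_eq_one hφ hφ_sq, MulChar.ringHomComp_apply, eq_intCast]
  exact_mod_cast congrArg (Int.cast : ℤ → R) hcard

theorem sum_comp_sq_eq_sum_apply_add_one_mul {φ : MulChar F R} (hφ : φ ≠ 1)
    (hφ_sq : φ ^ 2 = 1) (f : F → R) : ∑ t, f (t ^ 2) = ∑ u, (φ u + 1) * f u := by
  classical
  rw [← sum_fiberwise' univ (fun t : F => t ^ 2) f]
  refine sum_congr rfl fun u _ => ?_
  rw [sum_const, nsmul_eq_mul, card_sqrts_eq_apply_add_one hφ hφ_sq]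

end QuadraticCharacter

section JacobiAndGaussSums

variable {F R : Type*} [Field F] [Fintype F] [CommRing R]

theorem jacobiSum_self_eq_sum (hF : ringChar F ≠ 2) (χ : MulChar F R) :
    jacobiSum χ χ = χ⁻¹ 4 * ∑ t, χ (1 - t ^ 2) := by
  have h2 : (2 : F) ≠ 0 := Ring.two_ne_zero hF
  have h4 : (4 : F)⁻¹ = 2⁻¹ * 2⁻¹ := by rw [← mul_inv]; norm_num
  let halfOneAdd : F ≃ F := (Equiv.addLeft 1).trans (Equiv.mulLeft₀ 2⁻¹ (inv_ne_zero h2))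
  have hprod (t : F) : halfOneAdd t * (1 - halfOneAdd t) = 4⁻¹ * (1 - t ^ 2) := by
    change 2⁻¹ * (1 + t) * (1 - 2⁻¹ * (1 + t)) = _
    rw [h4]
    field_simp
    ring
  rw [jacobiSum, ← halfOneAdd.sum_comp, mul_sum]
  refine sum_congr rfl fun t _ => ?_
  rw [← map_mul, hprod, map_mul, MulChar.inv_apply']

variable [IsDomain R]

theorem jacobiSum_self_eq_mul_jacobiSum_quadratic {φ χ : MulChar F R} (hφ : φ ≠ 1)
    (hφ_sq : φ ^ 2 = 1) (hχ : χ ≠ 1) : jacobiSum χ χ = χ⁻¹ 4 * jacobiSum φ χ := by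
  have hsum_zero : ∑ u, χ (1 - u) = 0 :=
    ((Equiv.subLeft 1).sum_comp χ).trans (MulChar.sum_eq_zero_of_ne_one hχ)
  have hsum : ∑ t, χ (1 - t ^ 2) = jacobiSum φ χ :=
    calc ∑ t, χ (1 - t ^ 2) = ∑ u, (φ u + 1) * χ (1 - u) :=
          sum_comp_sq_eq_sum_apply_add_one_mul hφ hφ_sq fun u => χ (1 - u)
      _ = jacobiSum φ χ + ∑ u, χ (1 - u) := by
          simp only [add_mul, one_mul, sum_add_distrib, jacobiSum]
      _ = jacobiSum φ χ := by rw [hsum_zero, add_zero]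
  rw [jacobiSum_self_eq_sum (ringChar_ne_two_of_mulChar_sq_eq_one hφ hφ_sq), hsum]

theorem gaussSum_mul_gaussSum_inv {χ : MulChar F R} (hχ : χ ≠ 1) {ψ : AddChar F R}
    (hψ : ψ ≠ 1) : gaussSum χ ψ * gaussSum χ⁻¹ ψ = χ (-1) * Fintype.card F := by
  rw [← mul_gaussSum_inv_eq_gaussSum χ⁻¹ ψ, MulChar.inv_apply', inv_neg_one, mul_left_comm,
    gaussSum_mul_gaussSum_eq_card hχ (AddChar.IsPrimitive.of_ne_one hψ)]

theorem gaussSum_mul_gaussSum_mul_quadratic (hcard : (Fintype.card F : R) ≠ 0) {ψ : AddChar F R}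
    (hψ : ψ ≠ 1) {φ : MulChar F R} (hφ : φ ≠ 1) (hφ_sq : φ ^ 2 = 1) (χ : MulChar F R) :
    gaussSum χ ψ * gaussSum (χ * φ) ψ = χ⁻¹ 4 * gaussSum (χ ^ 2) ψ * gaussSum φ ψ := by
  classical
  have h2 : (2 : F) ≠ 0 := Ring.two_ne_zero (ringChar_ne_two_of_mulChar_sq_eq_one hφ hφ_sq)
  by_cases hχ_sq : χ ^ 2 = 1
  · have hχ4 : χ⁻¹ 4 = 1 := by
      rw [inv_eq_of_mul_eq_one_left (sq χ ▸ hχ_sq), show (4 : F) = 2 ^ 2 by norm_num, map_pow,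
        ← χ.pow_apply' two_ne_zero, hχ_sq, MulChar.one_apply h2.isUnit]
    rw [hχ_sq, hχ4, one_mul]
    rcases eq_or_ne χ 1 with rfl | hχ
    · rw [one_mul]
    · obtain rfl : χ = φ := (eq_quadraticChar_of_sq_eq_one hχ hχ_sq).trans
        (eq_quadraticChar_of_sq_eq_one hφ hφ_sq).symm
      rw [← sq, hχ_sq, mul_comm]
  · have hχ : χ ≠ 1 := by rintro rfl; exact hχ_sq (one_pow 2)
    have hφχ : φ * χ ≠ 1 := fun h => hχ_sq <| by
      rw [← one_mul (χ ^ 2), ← hφ_sq, ← mul_pow, h, one_pow, hφ_sq]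
    have hG : gaussSum χ ψ ≠ 0 :=
      gaussSum_ne_zero_of_nontrivial hcard hχ (AddChar.IsPrimitive.of_ne_one hψ)
    have hJ : gaussSum (χ ^ 2) ψ * (χ⁻¹ 4 * jacobiSum φ χ) = gaussSum χ ψ * gaussSum χ ψ := by
      rw [← jacobiSum_self_eq_mul_jacobiSum_quadratic hφ hφ_sq hχ, sq]
      exact jacobiSum_mul_nontrivial (sq χ ▸ hχ_sq) ψ
    have hJφ : gaussSum (χ * φ) ψ * jacobiSum φ χ = gaussSum φ ψ * gaussSum χ ψ :=
      mul_comm φ χ ▸ jacobiSum_mul_nontrivial hφχ ψ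
    apply mul_left_cancel₀ hG
    linear_combination χ⁻¹ 4 * gaussSum (χ ^ 2) ψ * hJφ - gaussSum (χ * φ) ψ * hJ

end JacobiAndGaussSums

theorem mulChar_neg_four_eq_one {F R : Type*} [Field F] [CommMonoidWithZero R]
    (h2 : (2 : F) ≠ 0) (hi : IsSquare (-1 : F)) {χ : MulChar F R} (hχ : χ ^ 4 = 1) :
    χ (-4) = 1 := by
  obtain ⟨i, hi⟩ := hi
  have hfourth : (-4 : F) = (1 + i) ^ 4 := by linear_combination (i ^ 2 + 4 * i + 5) * hi
  have hne : 1 + i ≠ 0 := by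
    intro h
    have h4 : (2 : F) ^ 2 = 0 := by linear_combination -hfourth - (1 + i) ^ 3 * h
    exact h2 (pow_eq_zero_iff two_ne_zero |>.mp h4)
  rw [hfourth, map_pow, ← χ.pow_apply' four_ne_zero, hχ, MulChar.one_apply hne.isUnit]

theorem gaussSum_mul_quartic_mul_gaussSum_mul_quartic_inv {F R : Type*} [Field F] [Fintype F]
    [CommRing R] [IsDomain R] (hcard : (Fintype.card F : R) ≠ 0) {ψ : AddChar F R} (hψ : ψ ≠ 1)
    (hi : IsSquare (-1 : F)) {A : MulChar F R} (hA : A ^ 4 = 1) (hA_sq : A ^ 2 ≠ 1)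
    (χ : MulChar F R) :
    gaussSum (χ * A) ψ * gaussSum (χ * A⁻¹) ψ =
      A (-1) * (χ⁻¹ 4 * gaussSum (χ ^ 2 * A ^ 2) ψ * gaussSum (A ^ 2) ψ) := by
  have hA_sq_sq : (A ^ 2) ^ 2 = 1 := by rw [← pow_mul, hA]
  have h2 : (2 : F) ≠ 0 := Ring.two_ne_zero (ringChar_ne_two_of_mulChar_sq_eq_one hA_sq hA_sq_sq)
  have hA_inv : A⁻¹ = A * A ^ 2 := by
    rw [← pow_succ', inv_eq_of_mul_eq_one_left ((pow_succ A 3).symm.trans hA)]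
  have hA_inv_four : A⁻¹ 4 = A (-1) := by
    rw [show (4 : F) = -1 * -4 by norm_num, map_mul,
      mulChar_neg_four_eq_one h2 hi (by rw [inv_pow, hA, inv_one]), mul_one, MulChar.inv_apply',
      inv_neg_one]
  rw [hA_inv, ← mul_assoc, gaussSum_mul_gaussSum_mul_quadratic hcard hψ hA_sq hA_sq_sq, mul_pow,
    mul_inv, MulChar.mul_apply, hA_inv_four]
  ring

section HypergeometricSum

variable {F : Type} [Field F] [Fintype F]

theorem hyp2F1_one_eq_jacobiSum (A B C : MulChar F ℂ) :
    hyp2F1 A B C 1 =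
      (B⁻¹ * C) (-1) / Fintype.card F * jacobiSum B (A⁻¹ * B⁻¹ * C) := by
  rw [hyp2F1, map_one, jacobiSum, mul_sum, mul_sum]
  refine sum_congr rfl fun y _ => ?_
  rw [show y - 1 = -1 * (1 - y) by ring, map_mul, one_mul, mul_assoc A⁻¹, MulChar.mul_apply A⁻¹]
  ring

theorem hyp2F1_one_eq_gaussSum_div {ψ : AddChar F ℂ} (hψ : ψ ≠ 1) {A B C : MulChar F ℂ}
    (hB : B ≠ 1) (hAC : A ≠ C) :
    hyp2F1 A B C 1 =
      C (-1) * gaussSum (A⁻¹ * B⁻¹ * C) ψ / (gaussSum B⁻¹ ψ * gaussSum (A⁻¹ * C) ψ) := by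
  have hcard : (Fintype.card F : ℂ) ≠ 0 := Nat.cast_ne_zero.mpr Fintype.card_ne_zero
  have hprim := AddChar.IsPrimitive.of_ne_one hψ
  have hAC' : A⁻¹ * C ≠ 1 := fun h => hAC (inv_mul_eq_one.mp h)
  have hG_B := gaussSum_ne_zero_of_nontrivial hcard (inv_ne_one.mpr hB) hprim
  have hG_AC := gaussSum_ne_zero_of_nontrivial hcard hAC' hprim
  have hprod : B * (A⁻¹ * B⁻¹ * C) = A⁻¹ * C := by
    rw [mul_right_comm, mul_comm B, inv_mul_cancel_right]
  have hjacobi : gaussSum (A⁻¹ * C) ψ * jacobiSum B (A⁻¹ * B⁻¹ * C) =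
      gaussSum B ψ * gaussSum (A⁻¹ * B⁻¹ * C) ψ :=
    hprod ▸ jacobiSum_mul_nontrivial (hprod ▸ hAC') ψ
  have hreflect := gaussSum_mul_gaussSum_inv hB hψ
  have hsign : B (-1) * B (-1) = 1 := by rw [← map_mul, neg_one_mul, neg_neg, map_one]
  rw [hyp2F1_one_eq_jacobiSum, MulChar.mul_apply, MulChar.inv_apply', inv_neg_one,
    div_mul_eq_mul_div, div_eq_div_iff hcard (mul_ne_zero hG_B hG_AC)]
  linear_combination B (-1) * C (-1) * gaussSum B⁻¹ ψ * hjacobi +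
    B (-1) * C (-1) * gaussSum (A⁻¹ * B⁻¹ * C) ψ * hreflect +
    C (-1) * Fintype.card F * gaussSum (A⁻¹ * B⁻¹ * C) ψ * hsign

end HypergeometricSum

/-- Value of `₂F₁(D, DA₄; A₄ | 1)` for `D ∉ {ε, A₄, A̅₄}`. -/
theorem hyp2F1_at_one
    (F : Type) [Field F] [Fintype F] [DecidableEq F]
    (hq : Fintype.card F % 4 = 1)
    (ψ : AddChar F ℂ) (hψ : ψ ≠ 1)
    (A₄ : MulChar F ℂ) (hA₄ : orderOf A₄ = 4)
    (D : MulChar F ℂ) (hD1 : D ≠ 1) (hD2 : D ≠ A₄) (hD3 : D ≠ A₄⁻¹) :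
    hyp2F1 D (D * A₄) A₄ (1 : F) =
      D⁻¹ (4 : F) * gaussSum (D⁻¹ ^ 2) ψ /
        (gaussSum (D⁻¹ ^ 2 * A₄ ^ 2) ψ * gaussSum (A₄ ^ 2) ψ) := by
  have hcard : (Fintype.card F : ℂ) ≠ 0 := Nat.cast_ne_zero.mpr Fintype.card_ne_zero
  have hi : IsSquare (-1 : F) := FiniteField.isSquare_neg_one_iff.mpr (by lia)
  have hA₄_pow : A₄ ^ 4 = 1 := hA₄ ▸ pow_orderOf_eq_one A₄
  have hA₄_sq : A₄ ^ 2 ≠ 1 := pow_ne_one_of_lt_orderOf two_ne_zero (by lia)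
  have hDA₄ : D * A₄ ≠ 1 := fun h => hD3 (eq_inv_of_mul_eq_one_left h)
  have hsign : A₄ (-1) ≠ 0 := (isUnit_one.neg.map A₄).ne_zero
  have hnum : D⁻¹ * (D * A₄)⁻¹ * A₄ = D⁻¹ ^ 2 := by
    rw [mul_inv, ← mul_assoc, inv_mul_cancel_right, sq]
  have hdenom := gaussSum_mul_quartic_mul_gaussSum_mul_quartic_inv hcard hψ hi hA₄_pow hA₄_sq D⁻¹
  calc hyp2F1 D (D * A₄) A₄ 1
      = A₄ (-1) * gaussSum (D⁻¹ ^ 2) ψ /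
          (gaussSum (D⁻¹ * A₄) ψ * gaussSum (D⁻¹ * A₄⁻¹) ψ) := by
        rw [hyp2F1_one_eq_gaussSum_div hψ hDA₄ hD2, hnum, mul_inv, mul_comm (gaussSum _ ψ)]
    _ = gaussSum (D⁻¹ ^ 2) ψ /
          (D 4 * gaussSum (D⁻¹ ^ 2 * A₄ ^ 2) ψ * gaussSum (A₄ ^ 2) ψ) := by
        rw [hdenom, mul_div_mul_left _ _ hsign, inv_inv]
    _ = _ := by
        rw [MulChar.inv_apply_eq_inv', mul_assoc, div_mul_eq_div_div, div_eq_inv_mul _ (D 4)]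
end
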